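/- Define h_i^{(p)} for p = 1, 2, 3 by: h_1^{(1)} = 1/q_1; h_i^{(1)} = F̃_i·h_{i−1}^{(1)} + 1/q_i for i = 2,…,N; h_1^{(p)} = 0 for p = 2, 3; h_i^{(2)} = F̃_i·(h_{i−1}^{(2)} + 2·h_{i−1}^{(1)}·h_{i−1}^{(1)}) for i = 2,…,N; and h_i^{(3)} = F̃_i·(h_{i−1}^{(3)} + 3·h_{i−1}^{(1)}·h_{i−1}^{(2)}) + 3·h_{i−1}^{(1)}·h_i^{(2)} for i = 2,…,N. Then J_2(B) = Σ_{i=1}^{N} ( h_i^{(2)} + (h_i^{(1)})^2 ) and J_3(B) = (1/2)·Σ_{i=1}^{N} ( h_i^{(3)} + 3·h_i^{(2)}·h_i^{(1)} + 2·(h_i^{(1)})^3 ). -/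

import Mathlib

open Matrix

/-!
Fill the region above the diagonal of an infinite symmetric matrix `G` by letting each column
`n + 1` be a multiple `r n` of column `n`. For `r n = -b n / a (n + 1)` and the diagonal given by
`h 1`, the leading block of `G` is the inverse of `B * Bᵀ`, where `B` has diagonal `a` and
superdiagonal `b`, so the traces sought are those of the powers of that block. Let `v` be the part
of column `n` above the diagonal and `A` the block it borders. Passing to the next block adds
`2 v·v + d²` to the trace of the square and `3 v·Av + 3 d v·v + d³` to that of the cube, with
`d = h 1 n`. Since the next column is proportional to `(v, d)`, the numbers `2 v·v` and `6 v·Av`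
satisfy the recurrences of `h 2` and `h 3`.
-/

section Trace

variable {m n R : Type*} [Fintype m] [Fintype n] [CommSemiring R]

lemma trace_fromBlocks_eq_add (A : Matrix m m R) (B : Matrix m n R) (C : Matrix n m R)
    (D : Matrix n n R) : trace (fromBlocks A B C D) = trace A + trace D :=
  Fintype.sum_sum_type _

variable [DecidableEq m] [DecidableEq n]

lemma trace_mul_pow_comm (A B : Matrix n n R) (p : ℕ) :
    trace ((A * B) ^ p) = trace ((B * A) ^ p) := by
  cases p with
  | zero => simp only [pow_zero]
  | succ p =>
    rw [pow_succ, ← Matrix.mul_assoc, mul_pow_mul, Matrix.mul_assoc, trace_mul_comm,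
      Matrix.mul_assoc, ← pow_succ]

lemma trace_submatrix_equiv_pow (e : m ≃ n) (M : Matrix n n R) (p : ℕ) :
    trace (M.submatrix e e ^ p) = trace (M ^ p) := by
  have hpow : M.submatrix e e ^ p = (M ^ p).submatrix e e :=
    (map_pow (reindexAlgEquiv R R e.symm) M p).symm
  rw [hpow]
  exact e.sum_comp (M ^ p).diag

lemma trace_fromBlocks_sq (A : Matrix m m R) (B : Matrix m n R) (C : Matrix n m R)
    (D : Matrix n n R) :
    trace (fromBlocks A B C D ^ 2) = trace (A ^ 2) + 2 * trace (C * B) + trace (D ^ 2) := by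
  simp only [pow_two, fromBlocks_multiply, trace_fromBlocks_eq_add, trace_add]
  rw [trace_mul_comm B C]
  ring

lemma trace_fromBlocks_pow_three (A : Matrix m m R) (B : Matrix m n R) (C : Matrix n m R)
    (D : Matrix n n R) :
    trace (fromBlocks A B C D ^ 3) =
      trace (A ^ 3) + 3 * trace (C * A * B) + 3 * trace (D * C * B) + trace (D ^ 3) := by
  simp only [pow_succ, pow_zero, one_mul, fromBlocks_multiply, trace_fromBlocks_eq_add,
    trace_add, Matrix.add_mul]
  rw [trace_mul_cycle B C A, trace_mul_cycle A B C, trace_mul_cycle B D C, trace_mul_cycle C B D]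
  ring

lemma trace_inv_transpose_mul_self_pow {n R : Type*} [Fintype n] [DecidableEq n]
    [CommRing R] {B G : Matrix n n R} (hG : Bᵀ * (G * B) = 1) (p : ℕ) :
    trace ((Bᵀ * B)⁻¹ ^ p) = trace (G ^ p) := by
  have hBT : IsUnit Bᵀ.det := isUnit_det_of_right_inverse hG
  have hB : IsUnit B.det := by rwa [det_transpose] at hBT
  rw [Matrix.mul_inv_rev, inv_eq_right_inv hG, trace_mul_pow_comm,
    mul_nonsing_inv_cancel_right _ _ hB]

end Trace

section Triangular

variable {ι R : Type*} [Fintype ι] [LinearOrder ι] [CommSemiring R]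

/-- A strictly upper entry of `Bᵀ * (G * B)` vanishes because both factors are lower triangular;
symmetry takes care of the strictly lower ones. -/
lemma transpose_mul_mul_self_eq_one {B G : Matrix ι ι R} (hG : G.IsSymm)
    (hB : B.BlockTriangular id) (hGB : (G * B).BlockTriangular OrderDual.toDual)
    (hdiag : ∀ i, B i i * (G * B) i i = 1) : Bᵀ * (G * B) = 1 := by
  have hsymm : (Bᵀ * (G * B)).IsSymm := by
    rw [IsSymm, transpose_mul, transpose_mul, transpose_transpose, hG.eq, Matrix.mul_assoc]
  have hlower : (Bᵀ * (G * B)).BlockTriangular OrderDual.toDual := hB.transpose.mul hGB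
  ext i j
  rcases lt_trichotomy i j with hij | rfl | hij
  · rw [hlower hij, one_apply_ne hij.ne]
  · rw [one_apply_eq, mul_apply, Finset.sum_eq_single i _ (by simp), transpose_apply, hdiag]
    intro k _ hk
    rcases hk.lt_or_gt with hki | hik
    · rw [hGB hki, mul_zero]
    · rw [transpose_apply, hB hik, zero_mul]
  · rw [← hsymm.apply, hlower hij, one_apply_ne hij.ne']

end Triangular

lemma snoc_dotProduct_snoc {R : Type*} [NonUnitalNonAssocSemiring R] {n : ℕ} (u v : Fin n → R)
    (x y : R) :
    Fin.snoc (α := fun _ => R) u x ⬝ᵥ Fin.snoc (α := fun _ => R) v y = u ⬝ᵥ v + x * y := by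
  simp [dotProduct, Fin.sum_univ_castSucc]

section LeadingBlock

variable {R : Type*}

/-- The leading principal `n × n` submatrix of an infinite matrix. -/
def leadingBlock (G : Matrix ℕ ℕ R) (n : ℕ) : Matrix (Fin n) (Fin n) R :=
  G.submatrix Fin.val Fin.val

/-- The part of column `n` of an infinite matrix lying strictly above the diagonal: the vector
by which `leadingBlock G n` is bordered in `leadingBlock G (n + 1)`. -/
def borderColumn (G : Matrix ℕ ℕ R) (n : ℕ) : Fin n → R :=
  fun i => G i n

lemma leadingBlock_isSymm {G : Matrix ℕ ℕ R} (hG : G.IsSymm) (n : ℕ) :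
    (leadingBlock G n).IsSymm :=
  hG.submatrix _

lemma leadingBlock_succ_submatrix {G : Matrix ℕ ℕ R} (hG : G.IsSymm) (n : ℕ) :
    (leadingBlock G (n + 1)).submatrix finSumFinEquiv finSumFinEquiv =
      fromBlocks (leadingBlock G n) (replicateCol (Fin 1) (borderColumn G n))
        (replicateRow (Fin 1) (borderColumn G n)) (of fun _ _ => G n n) := by
  ext (i | i) (j | j)
  · rfl
  · simp [leadingBlock, borderColumn]
  · simp [leadingBlock, borderColumn, hG.apply]
  · simp [leadingBlock]

variable [CommSemiring R] {G : Matrix ℕ ℕ R}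

lemma trace_leadingBlock_succ_sq (hG : G.IsSymm) (n : ℕ) :
    trace (leadingBlock G (n + 1) ^ 2) = trace (leadingBlock G n ^ 2) +
      (2 * (borderColumn G n ⬝ᵥ borderColumn G n) + G n n ^ 2) := by
  rw [← trace_submatrix_equiv_pow finSumFinEquiv, leadingBlock_succ_submatrix hG,
    trace_fromBlocks_sq, replicateRow_mul_replicateCol]
  simp only [trace_fin_one, pow_two, mul_apply, Fin.sum_univ_one, of_apply]
  ring

lemma trace_leadingBlock_succ_pow_three (hG : G.IsSymm) (n : ℕ) :
    trace (leadingBlock G (n + 1) ^ 3) = trace (leadingBlock G n ^ 3) +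
      (3 * (borderColumn G n ⬝ᵥ leadingBlock G n *ᵥ borderColumn G n) +
        3 * G n n * (borderColumn G n ⬝ᵥ borderColumn G n) + G n n ^ 3) := by
  rw [← trace_submatrix_equiv_pow finSumFinEquiv, leadingBlock_succ_submatrix hG,
    trace_fromBlocks_pow_three, Matrix.mul_assoc, ← replicateCol_mulVec, Matrix.mul_assoc,
    replicateRow_mul_replicateCol, replicateRow_mul_replicateCol]
  simp only [trace_fin_one, pow_succ, pow_zero, one_mul, mul_apply, Fin.sum_univ_one, of_apply]
  ring

lemma trace_leadingBlock_sq (hG : G.IsSymm) (n : ℕ) :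
    trace (leadingBlock G n ^ 2) =
      ∑ i ∈ Finset.range n, (2 * (borderColumn G i ⬝ᵥ borderColumn G i) + G i i ^ 2) := by
  induction n with
  | zero => rfl
  | succ n ih => rw [trace_leadingBlock_succ_sq hG, ih, Finset.sum_range_succ]

lemma trace_leadingBlock_pow_three (hG : G.IsSymm) (n : ℕ) :
    trace (leadingBlock G n ^ 3) =
      ∑ i ∈ Finset.range n, (3 * (borderColumn G i ⬝ᵥ leadingBlock G i *ᵥ borderColumn G i) +
        3 * G i i * (borderColumn G i ⬝ᵥ borderColumn G i) + G i i ^ 3) := by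
  induction n with
  | zero => rfl
  | succ n ih => rw [trace_leadingBlock_succ_pow_three hG, ih, Finset.sum_range_succ]

lemma leadingBlock_succ_mulVec_snoc (hG : G.IsSymm) (n : ℕ) (v : Fin n → R) (x : R) :
    leadingBlock G (n + 1) *ᵥ Fin.snoc (α := fun _ => R) v x =
      Fin.snoc (α := fun _ => R) (leadingBlock G n *ᵥ v + x • borderColumn G n)
        (borderColumn G n ⬝ᵥ v + G n n * x) := by
  ext i
  refine Fin.lastCases ?_ (fun i => ?_) i
  · simp [mulVec, dotProduct, Fin.sum_univ_castSucc, leadingBlock, borderColumn, hG.apply]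
  · simp [mulVec, dotProduct, Fin.sum_univ_castSucc, leadingBlock, borderColumn, mul_comm]

end LeadingBlock

section Green

variable {R : Type*} [CommSemiring R] (r d : ℕ → R)

/-- The infinite symmetric single-pair (Green's) matrix with diagonal `d` in which, above the
diagonal, column `n + 1` is `r n` times column `n`. Its invertible leading blocks have
tridiagonal inverses. -/
def greenMatrix : Matrix ℕ ℕ R :=
  of fun i j => d (min i j) * ∏ k ∈ Finset.Ico (min i j) (max i j), r k

lemma greenMatrix_isSymm : (greenMatrix r d).IsSymm :=
  IsSymm.ext fun i j => by simp only [greenMatrix, of_apply, min_comm, max_comm]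

lemma greenMatrix_apply_self (n : ℕ) : greenMatrix r d n n = d n := by
  simp [greenMatrix]

lemma greenMatrix_apply_succ {i n : ℕ} (hin : i ≤ n) :
    greenMatrix r d i (n + 1) = r n * greenMatrix r d i n := by
  simp only [greenMatrix, of_apply, min_eq_left hin, max_eq_right hin,
    min_eq_left (Nat.le_succ_of_le hin), max_eq_right (Nat.le_succ_of_le hin)]
  rw [Finset.prod_Ico_succ_top hin]
  ring

lemma borderColumn_greenMatrix_succ (n : ℕ) :
    borderColumn (greenMatrix r d) (n + 1) =
      r n • Fin.snoc (α := fun _ => R) (borderColumn (greenMatrix r d) n) (d n) := by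
  ext i
  refine Fin.lastCases ?_ (fun i => ?_) i
  · simp [borderColumn, greenMatrix_apply_succ, greenMatrix_apply_self]
  · simp [borderColumn, greenMatrix_apply_succ r d i.is_lt.le]

lemma borderColumn_greenMatrix_succ_dotProduct_self (n : ℕ) :
    borderColumn (greenMatrix r d) (n + 1) ⬝ᵥ borderColumn (greenMatrix r d) (n + 1) =
      r n ^ 2 * (borderColumn (greenMatrix r d) n ⬝ᵥ borderColumn (greenMatrix r d) n
        + d n ^ 2) := by
  rw [borderColumn_greenMatrix_succ, smul_dotProduct, dotProduct_smul, snoc_dotProduct_snoc]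
  simp only [smul_eq_mul]
  ring

lemma borderColumn_greenMatrix_succ_dotProduct_mulVec (n : ℕ) :
    borderColumn (greenMatrix r d) (n + 1) ⬝ᵥ
        leadingBlock (greenMatrix r d) (n + 1) *ᵥ borderColumn (greenMatrix r d) (n + 1) =
      r n ^ 2 * (borderColumn (greenMatrix r d) n ⬝ᵥ
          leadingBlock (greenMatrix r d) n *ᵥ borderColumn (greenMatrix r d) n
        + 2 * d n * (borderColumn (greenMatrix r d) n ⬝ᵥ borderColumn (greenMatrix r d) n)
        + d n ^ 3) := by
  rw [borderColumn_greenMatrix_succ, mulVec_smul, smul_dotProduct, dotProduct_smul,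
    leadingBlock_succ_mulVec_snoc (greenMatrix_isSymm r d), snoc_dotProduct_snoc,
    greenMatrix_apply_self, dotProduct_add, dotProduct_smul]
  simp only [smul_eq_mul]
  ring

variable {r d} {N : ℕ} {h₂ h₃ : ℕ → R}

lemma eq_two_mul_borderColumn_dotProduct_self (h₂_zero : h₂ 0 = 0)
    (h₂_succ : ∀ n, n + 1 < N → h₂ (n + 1) = r n ^ 2 * (h₂ n + 2 * d n * d n)) :
    ∀ n < N, h₂ n =
      2 * (borderColumn (greenMatrix r d) n ⬝ᵥ borderColumn (greenMatrix r d) n) := by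
  intro n hn
  induction n with
  | zero => simp [h₂_zero]
  | succ n ih =>
    rw [h₂_succ n hn, borderColumn_greenMatrix_succ_dotProduct_self, ih (by lia)]
    ring

lemma eq_six_mul_borderColumn_dotProduct_mulVec (h₂_zero : h₂ 0 = 0) (h₃_zero : h₃ 0 = 0)
    (h₂_succ : ∀ n, n + 1 < N → h₂ (n + 1) = r n ^ 2 * (h₂ n + 2 * d n * d n))
    (h₃_succ : ∀ n, n + 1 < N →
      h₃ (n + 1) = r n ^ 2 * (h₃ n + 3 * d n * h₂ n) + 3 * d n * h₂ (n + 1)) :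
    ∀ n < N, h₃ n = 6 * (borderColumn (greenMatrix r d) n ⬝ᵥ
      leadingBlock (greenMatrix r d) n *ᵥ borderColumn (greenMatrix r d) n) := by
  intro n hn
  induction n with
  | zero => simp [h₃_zero]
  | succ n ih =>
    have hn' : n < N := by lia
    rw [h₃_succ n hn, borderColumn_greenMatrix_succ_dotProduct_mulVec, ih hn',
      h₂_succ n hn, eq_two_mul_borderColumn_dotProduct_self h₂_zero h₂_succ n hn']
    ring

lemma trace_leadingBlock_greenMatrix_sq (h₂_zero : h₂ 0 = 0)
    (h₂_succ : ∀ n, n + 1 < N → h₂ (n + 1) = r n ^ 2 * (h₂ n + 2 * d n * d n)) :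
    trace (leadingBlock (greenMatrix r d) N ^ 2) =
      ∑ i ∈ Finset.range N, (h₂ i + d i ^ 2) := by
  rw [trace_leadingBlock_sq (greenMatrix_isSymm r d)]
  refine Finset.sum_congr rfl fun i hi => ?_
  rw [greenMatrix_apply_self, eq_two_mul_borderColumn_dotProduct_self h₂_zero h₂_succ i
    (Finset.mem_range.mp hi)]

lemma two_mul_trace_leadingBlock_greenMatrix_pow_three (h₂_zero : h₂ 0 = 0) (h₃_zero : h₃ 0 = 0)
    (h₂_succ : ∀ n, n + 1 < N → h₂ (n + 1) = r n ^ 2 * (h₂ n + 2 * d n * d n))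
    (h₃_succ : ∀ n, n + 1 < N →
      h₃ (n + 1) = r n ^ 2 * (h₃ n + 3 * d n * h₂ n) + 3 * d n * h₂ (n + 1)) :
    2 * trace (leadingBlock (greenMatrix r d) N ^ 3) =
      ∑ i ∈ Finset.range N, (h₃ i + 3 * h₂ i * d i + 2 * d i ^ 3) := by
  rw [trace_leadingBlock_pow_three (greenMatrix_isSymm r d), Finset.mul_sum]
  refine Finset.sum_congr rfl fun i hi => ?_
  have hi' := Finset.mem_range.mp hi
  rw [greenMatrix_apply_self, eq_two_mul_borderColumn_dotProduct_self h₂_zero h₂_succ i hi',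
    eq_six_mul_borderColumn_dotProduct_mulVec h₂_zero h₃_zero h₂_succ h₃_succ i hi']
  ring

end Green

section Bidiagonal

/-- The infinite upper bidiagonal matrix with diagonal `a` and superdiagonal `b`. -/
def upperBidiagonal {R : Type*} [Zero R] (a b : ℕ → R) : Matrix ℕ ℕ R :=
  of fun i j => if j = i then a i else if j = i + 1 then b i else 0

lemma leadingBlock_upperBidiagonal_blockTriangular {R : Type*} [Zero R] (a b : ℕ → R) (N : ℕ) :
    (leadingBlock (upperBidiagonal a b) N).BlockTriangular id := by
  intro i j (hji : (j : ℕ) < i)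
  simp [leadingBlock, upperBidiagonal, hji.ne, (Nat.lt_succ_of_lt hji).ne]

lemma leadingBlock_mul_upperBidiagonal_apply_zero {R : Type*} [CommSemiring R] (G : Matrix ℕ ℕ R)
    (a b : ℕ → R) {N : ℕ} (hN : 0 < N) (i : Fin N) :
    (leadingBlock G N * leadingBlock (upperBidiagonal a b) N) i ⟨0, hN⟩ = G i 0 * a 0 := by
  rw [mul_apply, Finset.sum_eq_single ⟨0, hN⟩]
  · simp [leadingBlock, upperBidiagonal]
  · intro k _ hk
    have hk₀ : 0 ≠ (k : ℕ) := fun h => hk (Fin.ext h.symm)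
    simp [leadingBlock, upperBidiagonal, hk₀]
  · simp

lemma leadingBlock_mul_upperBidiagonal_apply_succ {R : Type*} [CommSemiring R] (G : Matrix ℕ ℕ R)
    (a b : ℕ → R) {N n : ℕ} (hn : n + 1 < N) (i : Fin N) :
    (leadingBlock G N * leadingBlock (upperBidiagonal a b) N) i ⟨n + 1, hn⟩ =
      G i n * b n + G i (n + 1) * a (n + 1) := by
  have hne : (⟨n, by lia⟩ : Fin N) ≠ ⟨n + 1, hn⟩ := by simp
  rw [mul_apply, Finset.sum_eq_add _ _ hne]
  · simp [leadingBlock, upperBidiagonal]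
  · rintro k - ⟨hkn, hkn'⟩
    have h₁ : n + 1 ≠ k := fun h => hkn' (Fin.ext h.symm)
    have h₂ : n ≠ k := fun h => hkn (Fin.ext h.symm)
    simp [leadingBlock, upperBidiagonal, h₁, h₂]
  · simp
  · simp

variable {K : Type*} [Field K] {N : ℕ} {a b d : ℕ → K}

lemma green_mul_upperBidiagonal_blockTriangular (ha : ∀ i < N, a i ≠ 0) :
    (leadingBlock (greenMatrix (fun n => -(b n / a (n + 1))) d) N *
      leadingBlock (upperBidiagonal a b) N).BlockTriangular OrderDual.toDual := by
  rintro i ⟨_ | n, hj⟩ (hij : (i : ℕ) < _)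
  · exact absurd hij (Nat.not_lt_zero _)
  · rw [leadingBlock_mul_upperBidiagonal_apply_succ,
      greenMatrix_apply_succ _ _ (Nat.le_of_lt_succ hij)]
    have := ha _ hj
    field_simp
    ring

lemma green_mul_upperBidiagonal_diag (ha : ∀ i < N, a i ≠ 0) (hd_zero : d 0 = 1 / a 0 ^ 2)
    (hd_succ : ∀ n, n + 1 < N →
      d (n + 1) = (b n / a (n + 1)) ^ 2 * d n + 1 / a (n + 1) ^ 2) (i : Fin N) :
    leadingBlock (upperBidiagonal a b) N i i *
      (leadingBlock (greenMatrix (fun n => -(b n / a (n + 1))) d) N *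
        leadingBlock (upperBidiagonal a b) N) i i = 1 := by
  have hdiag : leadingBlock (upperBidiagonal a b) N i i = a i := by
    simp [leadingBlock, upperBidiagonal]
  have hai := ha i i.is_lt
  rw [hdiag]
  obtain ⟨_ | n, hi⟩ := i
  · rw [leadingBlock_mul_upperBidiagonal_apply_zero, greenMatrix_apply_self, hd_zero]
    field_simp
  · rw [leadingBlock_mul_upperBidiagonal_apply_succ, (greenMatrix_isSymm _ _).apply n,
      greenMatrix_apply_succ _ _ le_rfl, greenMatrix_apply_self, greenMatrix_apply_self,
      hd_succ n hi]
    field_simp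
    ring

lemma transpose_upperBidiagonal_mul_green_mul (ha : ∀ i < N, a i ≠ 0)
    (hd_zero : d 0 = 1 / a 0 ^ 2)
    (hd_succ : ∀ n, n + 1 < N →
      d (n + 1) = (b n / a (n + 1)) ^ 2 * d n + 1 / a (n + 1) ^ 2) :
    (leadingBlock (upperBidiagonal a b) N)ᵀ *
      (leadingBlock (greenMatrix (fun n => -(b n / a (n + 1))) d) N *
        leadingBlock (upperBidiagonal a b) N) = 1 :=
  transpose_mul_mul_self_eq_one (leadingBlock_isSymm (greenMatrix_isSymm _ _) N)
    (leadingBlock_upperBidiagonal_blockTriangular a b N)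
    (green_mul_upperBidiagonal_blockTriangular ha)
    (green_mul_upperBidiagonal_diag ha hd_zero hd_succ)

end Bidiagonal

theorem stmt_17_general {K : Type*} [Field K] (N : ℕ) (hN : 0 < N) (q e a b : ℕ → K)
    (hq : ∀ i, i < N → q i ≠ 0) (ha : ∀ i, i < N → a i ^ 2 = q i)
    (hb : ∀ i, i + 1 < N → b i ^ 2 = e i)
    (B : Matrix (Fin N) (Fin N) K)
    (hB : ∀ i j : Fin N, B i j =
      if (j : ℕ) = (i : ℕ) then a i else if (j : ℕ) = (i : ℕ) + 1 then b i else 0)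
    (h : ℕ → ℕ → K)
    (hh1a : h 1 0 = 1 / q 0)
    (hh1b : ∀ i, 0 < i → i < N → h 1 i = e (i - 1) / q i * h 1 (i - 1) + 1 / q i)
    (hh20 : h 2 0 = 0)
    (hh30 : h 3 0 = 0)
    (hh2 : ∀ i, 0 < i → i < N →
      h 2 i = e (i - 1) / q i * (h 2 (i - 1) + 2 * h 1 (i - 1) * h 1 (i - 1)))
    (hh3 : ∀ i, 0 < i → i < N →
      h 3 i = e (i - 1) / q i * (h 3 (i - 1) + 3 * h 1 (i - 1) * h 2 (i - 1))
        + 3 * h 1 (i - 1) * h 2 i) :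
    trace ((Bᵀ * B)⁻¹ ^ 2) = ∑ i ∈ Finset.range N, (h 2 i + h 1 i ^ 2) ∧
    2 * trace ((Bᵀ * B)⁻¹ ^ 3) =
      ∑ i ∈ Finset.range N, (h 3 i + 3 * h 2 i * h 1 i + 2 * h 1 i ^ 3) := by
  obtain rfl : B = leadingBlock (upperBidiagonal a b) N := Matrix.ext hB
  have ha₀ (i : ℕ) (hi : i < N) : a i ≠ 0 := ne_zero_pow two_ne_zero (ha i hi ▸ hq i hi)
  have hr (n : ℕ) (hn : n + 1 < N) : e n / q (n + 1) = (-(b n / a (n + 1))) ^ 2 := by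
    rw [← hb n hn, ← ha _ hn, neg_sq, div_pow]
  have h₁_zero : h 1 0 = 1 / a 0 ^ 2 := by rw [hh1a, ha 0 hN]
  have h₁_succ (n : ℕ) (hn : n + 1 < N) :
      h 1 (n + 1) = (b n / a (n + 1)) ^ 2 * h 1 n + 1 / a (n + 1) ^ 2 := by
    rw [← neg_sq, ← hr n hn, ha _ hn]
    exact hh1b (n + 1) n.succ_pos hn
  have h₂_succ (n : ℕ) (hn : n + 1 < N) := hr n hn ▸ hh2 (n + 1) n.succ_pos hn
  have h₃_succ (n : ℕ) (hn : n + 1 < N) := hr n hn ▸ hh3 (n + 1) n.succ_pos hn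
  have hinv := transpose_upperBidiagonal_mul_green_mul ha₀ h₁_zero h₁_succ
  rw [trace_inv_transpose_mul_self_pow hinv, trace_inv_transpose_mul_self_pow hinv]
  exact ⟨trace_leadingBlock_greenMatrix_sq hh20 h₂_succ,
    two_mul_trace_leadingBlock_greenMatrix_pow_three hh20 hh30 h₂_succ h₃_succ⟩

/-- the expressions of `J_2(B)` and `J_3(B)` in terms of
`h_i^{(1)}, h_i^{(2)}, h_i^{(3)}`:
`J_2(B) = Σ_i (h_i^{(2)} + (h_i^{(1)})²)` and
`J_3(B) = (1/2) Σ_i (h_i^{(3)} + 3 h_i^{(2)} h_i^{(1)} + 2 (h_i^{(1)})³)`,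
where `J_p(B) = Tr((BᵀB)^{-p})`. Indices are 0-based: the paper's 1-based
`h_i^{(p)}` is `h p (i-1)`; `F̃_i = e_{i-1}/q_i` is `e (i-2) / q (i-1)`. -/
theorem stmt_17 (N : ℕ) (hN : 0 < N) (q e : ℕ → ℝ)
    (hq : ∀ i, i < N → 0 < q i) (he : ∀ i, i + 1 < N → 0 < e i)
    (B : Matrix (Fin N) (Fin N) ℝ)
    (hB : ∀ i j : Fin N, B i j =
      if (j : ℕ) = (i : ℕ) then Real.sqrt (q i)
      else if (j : ℕ) = (i : ℕ) + 1 then Real.sqrt (e i) else 0)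
    (h : ℕ → ℕ → ℝ)
    (hh1a : h 1 0 = 1 / q 0)
    (hh1b : ∀ i, 0 < i → i < N → h 1 i = e (i - 1) / q i * h 1 (i - 1) + 1 / q i)
    (hh20 : h 2 0 = 0)
    (hh30 : h 3 0 = 0)
    (hh2 : ∀ i, 0 < i → i < N →
      h 2 i = e (i - 1) / q i * (h 2 (i - 1) + 2 * h 1 (i - 1) * h 1 (i - 1)))
    (hh3 : ∀ i, 0 < i → i < N →
      h 3 i = e (i - 1) / q i * (h 3 (i - 1) + 3 * h 1 (i - 1) * h 2 (i - 1))
        + 3 * h 1 (i - 1) * h 2 i) :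
    Matrix.trace ((Bᵀ * B)⁻¹ ^ 2)
        = ∑ i ∈ Finset.range N, (h 2 i + h 1 i ^ 2) ∧
    Matrix.trace ((Bᵀ * B)⁻¹ ^ 3)
        = 1 / 2 * ∑ i ∈ Finset.range N, (h 3 i + 3 * h 2 i * h 1 i + 2 * h 1 i ^ 3) := by
  obtain ⟨hJ₂, hJ₃⟩ := stmt_17_general N hN q e _ _ (fun i hi => (hq i hi).ne')
    (fun i hi => Real.sq_sqrt (hq i hi).le) (fun i hi => Real.sq_sqrt (he i hi).le)
    B hB h hh1a hh1b hh20 hh30 hh2 hh3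
  exact ⟨hJ₂, by rw [← hJ₃]; ring⟩
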